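/- arXiv:2210.13789 — 2 statements merged into one kernel-verified Lean document; each statement's English description precedes it below -/
import Mathlib

section
/- Equip square complex matrices with the spectral norm (the operator norm induced by the Euclidean ℓ² norm). Let A = [[1,0],[0,2]], B = [[1,0],[0,0]], C = [[1,1],[1,0]] in M₂(ℂ), let I₂ be the 2×2 identity, and let P = A ⊗ B and Q = C ⊗ I₂ be the 4×4 Kronecker products, so P = [[1,0,0,0],[0,0,0,0],[0,0,2,0],[0,0,0,0]] and Q = [[1,0,1,0],[0,1,0,1],[1,0,0,0],[0,1,0,0]]. Then: (i) P ⊥_BJ Q in M₄(ℂ) with the spectral norm; (ii) A ⊥_BJ C in M₂(ℂ); (iii) B is NOT Birkhoff-James orthogonal to I₂, e.g. ‖B − (1/2)I₂‖ = 1/2 < 1 = ‖B‖. -/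
open Kronecker
open scoped Matrix.Norms.L2Operator

/-!
A matrix entry never exceeds the spectral norm in modulus. Hence if `A` attains its norm at an
entry where `C` vanishes, that entry of `A + α • C` keeps the value `‖A‖` for every `α`, so
`A ⊥_BJ C`. The spectral norm is submultiplicative for Kronecker products, so if moreover `B`
attains its norm at some entry, then `A ⊗ B ⊥_BJ C ⊗ D` for every `D` whatsoever. On the other
hand, a nonzero projection `p` has norm `1` while `2p - 1` is unitary, so `‖p - 1/2‖ = 1/2` and `p`
is not orthogonal to `1`.
-/

/-- Birkhoff-James orthogonality `u ⊥_BJ v` in a normed space over `𝕜`: no multiple of `v`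
added to `u` decreases its norm. The relation is not symmetric in `u` and `v`. -/
def IsBirkhoffJamesOrthogonal (𝕜 : Type*) {E : Type*} [NormedField 𝕜] [SeminormedAddCommGroup E]
    [NormedSpace 𝕜 E] (u v : E) : Prop :=
  ∀ α : 𝕜, ‖u + α • v‖ ≥ ‖u‖

section CStarRing

variable {E : Type*} [NormedRing E] [StarRing E] [CStarRing E] {p : E}

theorem norm_eq_one_of_isStarProjection (hp : IsStarProjection p) (hp₀ : p ≠ 0) : ‖p‖ = 1 := by
  have norm_mul_norm : ‖p‖ * ‖p‖ = ‖p‖ := by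
    rw [← CStarRing.norm_star_mul_self, hp.isSelfAdjoint.star_eq, hp.isIdempotentElem.eq]
  exact (mul_eq_left₀ (norm_ne_zero_iff.mpr hp₀)).mp norm_mul_norm

variable (𝕜 : Type*) [RCLike 𝕜] [NormedAlgebra 𝕜 E]

theorem norm_sub_half_smul_one_of_isStarProjection [Nontrivial E] (hp : IsStarProjection p) :
    ‖p - (1 / 2 : 𝕜) • (1 : E)‖ = 1 / 2 := by
  have eq_half_smul : p - (1 / 2 : 𝕜) • (1 : E) = (1 / 2 : 𝕜) • (2 * p - 1) := by
    rw [smul_sub, two_mul, ← two_smul 𝕜 p, smul_smul]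
    norm_num
  rw [eq_half_smul, norm_smul, CStarRing.norm_of_mem_unitary hp.two_mul_sub_one_mem_unitary]
  simp

theorem not_isBirkhoffJamesOrthogonal_one_of_isStarProjection (hp : IsStarProjection p)
    (hp₀ : p ≠ 0) : ¬ IsBirkhoffJamesOrthogonal 𝕜 p 1 := by
  intro h
  have : Nontrivial E := ⟨p, 0, hp₀⟩
  have norm_le := h (-(1 / 2))
  rw [neg_smul, ← sub_eq_add_neg, norm_sub_half_smul_one_of_isStarProjection 𝕜 hp,
    norm_eq_one_of_isStarProjection hp hp₀] at norm_le
  norm_num at norm_le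

end CStarRing

section Matrix

theorem kronecker_mulVec_apply {R l m n q : Type*} [NonUnitalSemiring R] [Fintype n] [Fintype q]
    (A : Matrix m n R) (B : Matrix l q R) (x : n × q → R) (i : m) (k : l) :
    ((A ⊗ₖ B).mulVec x) (i, k) = A.mulVec (fun j ↦ B.mulVec (fun r ↦ x (j, r)) k) i := by
  simp [Matrix.mulVec, dotProduct, Fintype.sum_prod_type, Finset.mul_sum, mul_assoc]

variable {𝕜 l m n q : Type*} [RCLike 𝕜] [Fintype l] [Fintype m] [Fintype n] [DecidableEq n]
  [Fintype q] [DecidableEq q]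

theorem sum_norm_sq_mulVec_le (A : Matrix m n 𝕜) (x : n → 𝕜) :
    ∑ i, ‖(A.mulVec x) i‖ ^ 2 ≤ ‖A‖ ^ 2 * ∑ j, ‖x j‖ ^ 2 := by
  have norm_le := pow_le_pow_left₀ (norm_nonneg _) (A.l2_opNorm_mulVec (WithLp.toLp 2 x)) 2
  simpa [mul_pow, EuclideanSpace.norm_sq_eq] using norm_le

theorem norm_entry_le_l2_opNorm (A : Matrix m n 𝕜) (i : m) (j : n) : ‖A i j‖ ≤ ‖A‖ := by
  have column_le : ∑ k, ‖A k j‖ ^ 2 ≤ ‖A‖ ^ 2 := by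
    simpa [Pi.single_apply, apply_ite] using sum_norm_sq_mulVec_le A (Pi.single j 1)
  refine le_of_sq_le_sq ?_ (norm_nonneg A)
  exact (Finset.single_le_sum (fun k _ ↦ sq_nonneg ‖A k j‖) (Finset.mem_univ i)).trans column_le

theorem l2_opNorm_kronecker_le (A : Matrix m n 𝕜) (B : Matrix l q 𝕜) :
    ‖A ⊗ₖ B‖ ≤ ‖A‖ * ‖B‖ := by
  rw [Matrix.l2_opNorm_def]
  refine ContinuousLinearMap.opNorm_le_bound _ (by positivity) fun x ↦ ?_
  refine le_of_sq_le_sq ?_ (by positivity)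
  rw [mul_pow, mul_pow, EuclideanSpace.norm_sq_eq, EuclideanSpace.norm_sq_eq]
  calc ∑ p, ‖((A ⊗ₖ B).mulVec x) p‖ ^ 2
      = ∑ k, ∑ i, ‖A.mulVec (fun j ↦ B.mulVec (fun r ↦ x (j, r)) k) i‖ ^ 2 := by
        simp only [Fintype.sum_prod_type_right, kronecker_mulVec_apply]
    _ ≤ ∑ k, ‖A‖ ^ 2 * ∑ j, ‖B.mulVec (fun r ↦ x (j, r)) k‖ ^ 2 :=
        Finset.sum_le_sum fun k _ ↦ sum_norm_sq_mulVec_le A _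
    _ = ‖A‖ ^ 2 * ∑ j, ∑ k, ‖B.mulVec (fun r ↦ x (j, r)) k‖ ^ 2 := by
        rw [← Finset.mul_sum, Finset.sum_comm]
    _ ≤ ‖A‖ ^ 2 * ∑ j, ‖B‖ ^ 2 * ∑ r, ‖x (j, r)‖ ^ 2 := by
        gcongr with j
        exact sum_norm_sq_mulVec_le B _
    _ = ‖A‖ ^ 2 * ‖B‖ ^ 2 * ∑ p, ‖x p‖ ^ 2 := by
        rw [← Finset.mul_sum, Fintype.sum_prod_type, mul_assoc]

theorem isBirkhoffJamesOrthogonal_of_norm_le_norm_entry {A C : Matrix m n 𝕜} {i : m} {j : n}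
    (hA : ‖A‖ ≤ ‖A i j‖) (hC : C i j = 0) : IsBirkhoffJamesOrthogonal 𝕜 A C := fun α ↦
  calc ‖A‖ ≤ ‖A i j‖ := hA
    _ = ‖(A + α • C) i j‖ := by simp [hC]
    _ ≤ ‖A + α • C‖ := norm_entry_le_l2_opNorm _ i j

theorem isBirkhoffJamesOrthogonal_kronecker_of_norm_le_norm_entry {A C : Matrix m n 𝕜}
    {B : Matrix l q 𝕜} {i : m} {j : n} {k : l} {r : q} (hA : ‖A‖ ≤ ‖A i j‖)
    (hB : ‖B‖ ≤ ‖B k r‖) (hC : C i j = 0) (D : Matrix l q 𝕜) :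
    IsBirkhoffJamesOrthogonal 𝕜 (A ⊗ₖ B) (C ⊗ₖ D) := by
  refine isBirkhoffJamesOrthogonal_of_norm_le_norm_entry (i := (i, k)) (j := (j, r)) ?_ ?_
  · calc ‖A ⊗ₖ B‖ ≤ ‖A‖ * ‖B‖ := l2_opNorm_kronecker_le A B
      _ ≤ ‖A i j‖ * ‖B k r‖ := by gcongr
      _ = ‖(A ⊗ₖ B) (i, k) (j, r)‖ := (norm_mul _ _).symm
  · simp [hC]

end Matrix

/-- With the spectral norm on square complex matrices, for
`A = [[1,0],[0,2]]`, `B = [[1,0],[0,0]]`, `C = [[1,1],[1,0]]` and the Kronecker products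
`P = A ⊗ B`, `Q = C ⊗ I₂`: `P ⊥_BJ Q` in `M₄(ℂ)`, `A ⊥_BJ C` in `M₂(ℂ)`, but `B` is not
Birkhoff-James orthogonal to `I₂` (indeed `‖B − (1/2)I₂‖ = 1/2 < 1 = ‖B‖`). -/
theorem stmt4
    (A B C : Matrix (Fin 2) (Fin 2) ℂ)
    (hA : A = !![1, 0; 0, 2]) (hB : B = !![1, 0; 0, 0]) (hC : C = !![1, 1; 1, 0])
    (P Q : Matrix (Fin 2 × Fin 2) (Fin 2 × Fin 2) ℂ)
    (hP : P = A ⊗ₖ B) (hQ : Q = C ⊗ₖ (1 : Matrix (Fin 2) (Fin 2) ℂ)) :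
    (∀ α : ℂ, ‖P + α • Q‖ ≥ ‖P‖) ∧
    (∀ α : ℂ, ‖A + α • C‖ ≥ ‖A‖) ∧
    (‖B - ((1 : ℂ) / 2) • (1 : Matrix (Fin 2) (Fin 2) ℂ)‖ = 1 / 2 ∧ ‖B‖ = 1 ∧
      ¬ (∀ α : ℂ, ‖B + α • (1 : Matrix (Fin 2) (Fin 2) ℂ)‖ ≥ ‖B‖)) := by
  have hA_norm : ‖A‖ ≤ ‖A 1 1‖ := by
    have hA_diag : A = Matrix.diagonal ![1, 2] := by
      rw [hA, Matrix.diagonal_fin_two]; rfl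
    rw [hA_diag, Matrix.l2_opNorm_diagonal, pi_norm_le_iff_of_nonneg (norm_nonneg _)]
    simp [Fin.forall_fin_two]
  have hB_proj : IsStarProjection B := by
    constructor <;> ext i j <;> fin_cases i <;> fin_cases j <;> simp [hB]
  have hB_entry : B 0 0 = 1 := by simp [hB]
  have hB_ne_zero : B ≠ 0 := fun h ↦ by simp [h] at hB_entry
  have hB_norm : ‖B‖ = 1 := norm_eq_one_of_isStarProjection hB_proj hB_ne_zero
  have hC_entry : C 1 1 = 0 := by simp [hC]
  refine ⟨?_, isBirkhoffJamesOrthogonal_of_norm_le_norm_entry hA_norm hC_entry,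
    norm_sub_half_smul_one_of_isStarProjection ℂ hB_proj, hB_norm,
    not_isBirkhoffJamesOrthogonal_one_of_isStarProjection ℂ hB_proj hB_ne_zero⟩
  rw [hP, hQ]
  have hB_norm_entry : ‖B‖ ≤ ‖B 0 0‖ := by simp [hB_norm, hB_entry]
  exact isBirkhoffJamesOrthogonal_kronecker_of_norm_le_norm_entry hA_norm hB_norm_entry hC_entry 1
end

section
/- Let K₁ and K₂ be compact Hausdorff topological spaces. Suppose f₁ ∈ C(K₁, ℂ) attains its supremum norm at exactly one point of K₁ (i.e. there is a unique k ∈ K₁ with |f₁(k)| = ‖f₁‖_∞) and g₁ ∈ C(K₂, ℂ) attains its supremum norm at exactly one point of K₂. Then for any f₂ ∈ C(K₁, ℂ) and g₂ ∈ C(K₂, ℂ): if the function F₁(s,t) = f₁(s)·g₁(t) is Birkhoff-James orthogonal in C(K₁ × K₂, ℂ) to F₂(s,t) = f₂(s)·g₂(t), then f₁ ⊥_BJ f₂ in C(K₁, ℂ) or g₁ ⊥_BJ g₂ in C(K₂, ℂ). -/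
/-!
In `C(K, E)` with `K` compact and nonempty and `E` an inner product space, `u` is Birkhoff-James
orthogonal to `v` if and only if for every scalar `α` some point `x` at which `u` attains its norm
satisfies `0 ≤ re ⟪u x, α • v x⟫`: otherwise a small step from `u` in the direction `α • v`
decreases the norm near each norm-attaining point, hence everywhere by compactness.

For nonzero `f₁` and `g₁`, the tensor `f₁ ⊗ g₁` attains its norm at `(s, t)` exactly when `f₁` does
at `s` and `g₁` does at `t`. If `s` is the only such point for `f₁`, then either `f₂ s = 0` and
`f₁ ⊥ f₂` by the criterion at `s`, or `f₂ s` can be absorbed into `α`, and the criterion for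
`f₁ ⊗ g₁` becomes the one for `g₁`.
-/

open RCLike
open scoped InnerProductSpace Topology

/-- Birkhoff-James orthogonality `u ⊥_BJ v` over the scalar field `𝕜`. -/
def BirkhoffJamesOrthogonal (𝕜 : Type*) {E : Type*} [NormedField 𝕜] [SeminormedAddCommGroup E]
    [NormedSpace 𝕜 E] (u v : E) : Prop :=
  ∀ α : 𝕜, ‖u + α • v‖ ≥ ‖u‖

theorem BirkhoffJamesOrthogonal.of_norm_eq_zero {𝕜 E : Type*} [NormedField 𝕜]
    [SeminormedAddCommGroup E] [NormedSpace 𝕜 E] {u : E} (hu : ‖u‖ = 0) (v : E) :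
    BirkhoffJamesOrthogonal 𝕜 u v :=
  fun α => hu.trans_le (norm_nonneg (u + α • v))

section InnerProduct

variable {𝕜 E : Type*} [RCLike 𝕜] [SeminormedAddCommGroup E] [InnerProductSpace 𝕜 E]

theorem norm_add_ofReal_smul_sq (a b : E) (t : ℝ) :
    ‖a + (t : 𝕜) • b‖ ^ 2 = ‖a‖ ^ 2 + t * (2 * re ⟪a, b⟫_𝕜 + t * ‖b‖ ^ 2) := by
  rw [norm_add_sq (𝕜 := 𝕜), inner_smul_right, re_ofReal_mul, norm_smul, norm_ofReal, mul_pow,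
    sq_abs]
  ring

theorem norm_le_norm_add_of_re_inner_nonneg {a b : E} (h : 0 ≤ re ⟪a, b⟫_𝕜) :
    ‖a‖ ≤ ‖a + b‖ := by
  refine le_of_sq_le_sq ?_ (norm_nonneg _)
  rw [norm_add_sq (𝕜 := 𝕜)]
  linarith [sq_nonneg ‖b‖]

theorem re_inner_smul_smul_self (c : 𝕜) (a b : E) :
    re ⟪c • a, c • b⟫_𝕜 = ‖c‖ ^ 2 * re ⟪a, b⟫_𝕜 := by
  rw [inner_smul_left, inner_smul_right, ← mul_assoc, RCLike.conj_mul, ← ofReal_pow, re_ofReal_mul]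

end InnerProduct

section Criterion

variable {K 𝕜 E : Type*} [TopologicalSpace K] [CompactSpace K] [RCLike 𝕜]
  [SeminormedAddCommGroup E] [InnerProductSpace 𝕜 E]

theorem eventually_norm_add_ofReal_smul_lt {u v : C(K, E)} {x : K}
    (h : ‖u x‖ = ‖u‖ → re ⟪u x, v x⟫_𝕜 < 0) :
    ∀ᶠ p : ℝ × K in 𝓝 (0, x), 0 < p.1 → ‖u p.2 + (p.1 : 𝕜) • v p.2‖ < ‖u‖ := by
  rcases (u.norm_coe_le_norm x).lt_or_eq with hlt | heq
  · have hcont : Continuous fun p : ℝ × K => ‖u p.2 + (p.1 : 𝕜) • v p.2‖ := by fun_prop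
    have hzero : ‖u x + ((0 : ℝ) : 𝕜) • v x‖ < ‖u‖ := by simpa using hlt
    filter_upwards [hcont.continuousAt.eventually_lt_const hzero] with p hp _ using hp
  · have hcont : Continuous fun p : ℝ × K => 2 * re ⟪u p.2, v p.2⟫_𝕜 + p.1 * ‖v p.2‖ ^ 2 := by
      fun_prop
    have hzero : 2 * re ⟪u x, v x⟫_𝕜 + 0 * ‖v x‖ ^ 2 < 0 := by linarith [h heq]
    filter_upwards [hcont.continuousAt.eventually_lt_const hzero] with p hp hpos
    refine lt_of_pow_lt_pow_left₀ 2 (norm_nonneg u) ?_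
    calc ‖u p.2 + (p.1 : 𝕜) • v p.2‖ ^ 2
        = ‖u p.2‖ ^ 2 + p.1 * (2 * re ⟪u p.2, v p.2⟫_𝕜 + p.1 * ‖v p.2‖ ^ 2) :=
          norm_add_ofReal_smul_sq ..
      _ < ‖u p.2‖ ^ 2 := add_lt_of_neg_right _ (mul_neg_of_pos_of_neg hpos hp)
      _ ≤ ‖u‖ ^ 2 := by gcongr; exact u.norm_coe_le_norm p.2

theorem exists_pos_norm_add_ofReal_smul_lt [Nonempty K] {u v : C(K, E)}
    (h : ∀ x, ‖u x‖ = ‖u‖ → re ⟪u x, v x⟫_𝕜 < 0) :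
    ∃ t : ℝ, 0 < t ∧ ‖u + (t : 𝕜) • v‖ < ‖u‖ := by
  have huniform : ∀ᶠ t : ℝ in 𝓝 0, ∀ x ∈ Set.univ, 0 < t → ‖u x + (t : 𝕜) • v x‖ < ‖u‖ :=
    isCompact_univ.eventually_forall_of_forall_eventually fun x _ =>
      eventually_norm_add_ofReal_smul_lt (h x)
  obtain ⟨t, hlt, hpos⟩ :=
    ((huniform.filter_mono nhdsWithin_le_nhds).and (self_mem_nhdsWithin (s := Set.Ioi 0))).exists
  exact ⟨t, hpos, (ContinuousMap.norm_lt_iff_of_nonempty _).2 fun x => hlt x trivial hpos⟩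

theorem birkhoffJamesOrthogonal_iff_exists_re_inner_nonneg [Nonempty K] {u v : C(K, E)} :
    BirkhoffJamesOrthogonal 𝕜 u v ↔
      ∀ α : 𝕜, ∃ x, ‖u x‖ = ‖u‖ ∧ 0 ≤ re ⟪u x, α • v x⟫_𝕜 := by
  refine ⟨fun huv α => ?_, fun h α => ?_⟩
  · by_contra! hneg
    obtain ⟨t, -, hlt⟩ := exists_pos_norm_add_ofReal_smul_lt (u := u) (v := α • v) hneg
    rw [smul_smul] at hlt
    exact (huv _).not_gt hlt
  · obtain ⟨x, hx, hinner⟩ := h α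
    calc ‖u‖ = ‖u x‖ := hx.symm
      _ ≤ ‖u x + α • v x‖ := norm_le_norm_add_of_re_inner_nonneg hinner
      _ ≤ ‖u + α • v‖ := (u + α • v).norm_coe_le_norm x

end Criterion

theorem exists_norm_apply_eq_norm {K E : Type*} [TopologicalSpace K] [CompactSpace K] [Nonempty K]
    [SeminormedAddCommGroup E] (f : C(K, E)) : ∃ x, ‖f x‖ = ‖f‖ := by
  obtain ⟨x, -, hmax⟩ :=
    isCompact_univ.exists_isMaxOn Set.univ_nonempty f.continuous.norm.continuousOn
  exact ⟨x, (f.norm_coe_le_norm x).antisymm <|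
    f.norm_le_of_nonempty.2 fun y => hmax (Set.mem_univ y)⟩

section ElementaryTensor

variable {K₁ K₂ 𝕜 E : Type*} [TopologicalSpace K₁] [TopologicalSpace K₂] [NormedField 𝕜]
  [SeminormedAddCommGroup E] [NormedSpace 𝕜 E]

/-- The elementary tensor `f ⊗ g` as the function `(s, t) ↦ f s • g t` on `K₁ × K₂`; the second
factor is allowed to be vector-valued. -/
def elementaryTensor (f : C(K₁, 𝕜)) (g : C(K₂, E)) : C(K₁ × K₂, E) :=
  (f.comp ContinuousMap.fst : C(K₁ × K₂, 𝕜)) • (g.comp ContinuousMap.snd : C(K₁ × K₂, E))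

theorem elementaryTensor_apply (f : C(K₁, 𝕜)) (g : C(K₂, E)) (p : K₁ × K₂) :
    elementaryTensor f g p = f p.1 • g p.2 :=
  rfl

variable [CompactSpace K₁] [CompactSpace K₂]

theorem norm_elementaryTensor [Nonempty K₁] [Nonempty K₂]
    (f : C(K₁, 𝕜)) (g : C(K₂, E)) : ‖elementaryTensor f g‖ = ‖f‖ * ‖g‖ := by
  refine le_antisymm ((ContinuousMap.norm_le _ (by positivity)).2 fun p => ?_) ?_
  · rw [elementaryTensor_apply, norm_smul]
    gcongr
    exacts [f.norm_coe_le_norm p.1, g.norm_coe_le_norm p.2]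
  · obtain ⟨s, hs⟩ := exists_norm_apply_eq_norm f
    obtain ⟨t, ht⟩ := exists_norm_apply_eq_norm g
    calc ‖f‖ * ‖g‖ = ‖elementaryTensor f g (s, t)‖ := by
          rw [elementaryTensor_apply, norm_smul, hs, ht]
      _ ≤ ‖elementaryTensor f g‖ := (elementaryTensor f g).norm_coe_le_norm (s, t)

theorem norm_elementaryTensor_apply_eq_norm_iff {f : C(K₁, 𝕜)} {g : C(K₂, E)}
    (hf : ‖f‖ ≠ 0) (hg : ‖g‖ ≠ 0) {p : K₁ × K₂} :
    ‖elementaryTensor f g p‖ = ‖elementaryTensor f g‖ ↔ ‖f p.1‖ = ‖f‖ ∧ ‖g p.2‖ = ‖g‖ := by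
  have : Nonempty K₁ := ⟨p.1⟩
  have : Nonempty K₂ := ⟨p.2⟩
  rw [norm_elementaryTensor, elementaryTensor_apply, norm_smul]
  refine ⟨fun h => ?_, fun ⟨hf', hg'⟩ => by rw [hf', hg']⟩
  have hfp : ‖f p.1‖ ≠ 0 := left_ne_zero_of_mul (h.trans_ne (mul_ne_zero hf hg))
  exact (mul_eq_mul_iff_eq_and_eq_of_pos (f.norm_coe_le_norm p.1) (g.norm_coe_le_norm p.2)
    (by positivity) (by positivity)).1 h

end ElementaryTensor

theorem BirkhoffJamesOrthogonal.right_of_elementaryTensor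
    {K₁ K₂ 𝕜 E : Type*} [TopologicalSpace K₁] [CompactSpace K₁]
    [TopologicalSpace K₂] [CompactSpace K₂]
    [RCLike 𝕜] [SeminormedAddCommGroup E] [InnerProductSpace 𝕜 E]
    {f₁ f₂ : C(K₁, 𝕜)} {g₁ g₂ : C(K₂, E)} {s : K₁} (hf₁ : ‖f₁‖ ≠ 0)
    (hs : ∀ x, ‖f₁ x‖ = ‖f₁‖ → x = s) (hf₂ : f₂ s ≠ 0)
    (h : BirkhoffJamesOrthogonal 𝕜 (elementaryTensor f₁ g₁) (elementaryTensor f₂ g₂)) :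
    BirkhoffJamesOrthogonal 𝕜 g₁ g₂ := by
  by_cases hg₁ : ‖g₁‖ = 0
  · exact .of_norm_eq_zero hg₁ g₂
  have : Nonempty K₁ := ⟨s⟩
  have : Nonempty K₂ := by
    by_contra! hK₂
    exact hg₁ (by rw [Subsingleton.elim g₁ 0, norm_zero])
  rw [birkhoffJamesOrthogonal_iff_exists_re_inner_nonneg] at h ⊢
  intro α
  obtain ⟨⟨x, t⟩, hxt, hinner⟩ := h (α * (f₁ s / f₂ s))
  obtain ⟨hx, ht⟩ := (norm_elementaryTensor_apply_eq_norm_iff hf₁ hg₁).1 hxt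
  obtain rfl : x = s := hs x hx
  have hscale : (α * (f₁ x / f₂ x)) • f₂ x • g₂ t = f₁ x • α • g₂ t := by
    rw [smul_smul, smul_smul, mul_assoc, div_mul_cancel₀ _ hf₂, mul_comm]
  rw [elementaryTensor_apply, elementaryTensor_apply, hscale, re_inner_smul_smul_self, hx] at hinner
  exact ⟨t, ht, nonneg_of_mul_nonneg_right hinner (by positivity)⟩

theorem stmt9_general
    {K₁ K₂ 𝕜 E : Type*} [TopologicalSpace K₁] [CompactSpace K₁]
    [TopologicalSpace K₂] [CompactSpace K₂]
    [RCLike 𝕜] [SeminormedAddCommGroup E] [InnerProductSpace 𝕜 E]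
    (f₁ f₂ : C(K₁, 𝕜)) (g₁ g₂ : C(K₂, E))
    (hf₁ : ∃! k : K₁, ‖f₁ k‖ = ‖f₁‖)
    (hBJ : BirkhoffJamesOrthogonal 𝕜 (elementaryTensor f₁ g₁) (elementaryTensor f₂ g₂)) :
    BirkhoffJamesOrthogonal 𝕜 f₁ f₂ ∨ BirkhoffJamesOrthogonal 𝕜 g₁ g₂ := by
  obtain ⟨s, hs, hunique⟩ := hf₁
  have : Nonempty K₁ := ⟨s⟩
  by_cases hnorm : ‖f₁‖ = 0
  · exact .inl (.of_norm_eq_zero hnorm f₂)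
  by_cases hf₂ : f₂ s = 0
  · refine .inl (birkhoffJamesOrthogonal_iff_exists_re_inner_nonneg.2 fun α => ⟨s, hs, ?_⟩)
    simp [hf₂]
  · exact .inr (.right_of_elementaryTensor hnorm hunique hf₂ hBJ)

/-- For compact Hausdorff spaces `K₁, K₂`, if `f₁ ∈ C(K₁, ℂ)` attains its
supremum norm at exactly one point, and likewise `g₁ ∈ C(K₂, ℂ)`, then for any
`f₂ ∈ C(K₁, ℂ)` and `g₂ ∈ C(K₂, ℂ)`, Birkhoff-James orthogonality of `(s,t) ↦ f₁ s * g₁ t`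
to `(s,t) ↦ f₂ s * g₂ t` in `C(K₁ × K₂, ℂ)` implies `f₁ ⊥_BJ f₂` or `g₁ ⊥_BJ g₂`. -/
theorem stmt9
    {K₁ K₂ : Type*} [TopologicalSpace K₁] [CompactSpace K₁] [T2Space K₁]
    [TopologicalSpace K₂] [CompactSpace K₂] [T2Space K₂]
    (f₁ f₂ : C(K₁, ℂ)) (g₁ g₂ : C(K₂, ℂ))
    (hf₁ : ∃! k : K₁, ‖f₁ k‖ = ‖f₁‖)
    (hg₁ : ∃! k : K₂, ‖g₁ k‖ = ‖g₁‖)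
    (hBJ : ∀ α : ℂ,
      ‖(f₁.comp ContinuousMap.fst * g₁.comp ContinuousMap.snd) +
          α • (f₂.comp ContinuousMap.fst * g₂.comp ContinuousMap.snd)‖ ≥
        ‖f₁.comp ContinuousMap.fst * g₁.comp ContinuousMap.snd‖) :
    (∀ α : ℂ, ‖f₁ + α • f₂‖ ≥ ‖f₁‖) ∨ (∀ α : ℂ, ‖g₁ + α • g₂‖ ≥ ‖g₁‖) := by
  exact stmt9_general f₁ f₂ g₁ g₂ hf₁ hBJ
end
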